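/- Let M₁₀ = [[1,-2πi,0,0],[0,1,0,0],[0,0,1,-2πi],[0,0,0,1]] and let M₁∞ be the inverse of the matrix [[1,0,2πi,0],[0,-1,-2,0],[0,0,1,-2πi],[0,0,0,-1]]. Then the rank of (M₁₀·M₁∞)² − Id₄ equals 1; i.e., (M₁₀·M₁∞)² is a pseudo-reflection. -/

import Mathlib

open Complex Matrix

noncomputable def M10 : Matrix (Fin 4) (Fin 4) ℂ :=
  !![1, -2 * (Real.pi : ℂ) * I, 0, 0;
     0, 1, 0, 0;
     0, 0, 1, -2 * (Real.pi : ℂ) * I;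
     0, 0, 0, 1]

noncomputable def M1inf : Matrix (Fin 4) (Fin 4) ℂ :=
  (!![1, 0, 2 * (Real.pi : ℂ) * I, 0;
      0, -1, -2, 0;
      0, 0, 1, -2 * (Real.pi : ℂ) * I;
      0, 0, 0, -1])⁻¹

/-! The product `M₁₀ M₁∞` is a rank-one perturbation `J + u vᵀ` of an involution `J`, where
`J u = -u` and `vᵀ u = 0`. Expanding the square gives `(J + u vᵀ)² = 1 + u (vᵀ J - vᵀ)`, and
`vᵀ J ≠ vᵀ`. -/

section RankOne

variable {R m n : Type*} [Fintype n]

theorem rank_eq_zero_iff_eq_zero [CommRing R] [IsDomain R] {A : Matrix m n R} :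
    A.rank = 0 ↔ A = 0 := by
  classical
  rw [Matrix.rank, Submodule.finrank_eq_zero, LinearMap.range_eq_bot, ← Matrix.toLin'_apply',
    LinearEquiv.map_eq_zero_iff]

theorem rank_vecMulVec_eq_one [CommRing R] [IsDomain R] {u : m → R} {v : n → R}
    (hu : u ≠ 0) (hv : v ≠ 0) : (vecMulVec u v).rank = 1 := by
  have outer_ne_zero : vecMulVec u v ≠ 0 := by
    obtain ⟨i, hui⟩ := Function.ne_iff.1 hu
    obtain ⟨j, hvj⟩ := Function.ne_iff.1 hv
    exact fun h ↦ mul_ne_zero hui hvj congr($h i j)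
  exact le_antisymm (rank_vecMulVec_le u v) <|
    Nat.one_le_iff_ne_zero.2 <| rank_eq_zero_iff_eq_zero.not.2 outer_ne_zero

theorem add_vecMulVec_sq_of_mulVec_eq_smul [CommSemiring R] [DecidableEq n] {J : Matrix n n R}
    {u : n → R} {c : R} (hu : J *ᵥ u = c • u) (v : n → R) :
    (J + vecMulVec u v) ^ 2 = J ^ 2 + vecMulVec u ((c + v ⬝ᵥ u) • v + v ᵥ* J) :=
  calc (J + vecMulVec u v) ^ 2
      = J ^ 2 + (J * vecMulVec u v + vecMulVec u v * vecMulVec u v + vecMulVec u v * J) := by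
        simp only [sq, add_mul, mul_add]
        abel
    _ = J ^ 2 + vecMulVec u ((c + v ⬝ᵥ u) • v + v ᵥ* J) := by
        rw [mul_vecMulVec, hu, vecMulVec_mul_vecMulVec, vecMulVec_mul, smul_vecMulVec,
          ← vecMulVec_smul, ← vecMulVec_add, ← vecMulVec_add, ← add_smul]

end RankOne

section Monodromy

variable {R : Type*} [CommRing R]

/-- The monodromy matrix `M₁₀` with the period `2πi` replaced by a parameter `t`. -/
def monodromyZero (t : R) : Matrix (Fin 4) (Fin 4) R :=
  !![1, -t, 0, 0;
     0, 1, 0, 0;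
     0, 0, 1, -t;
     0, 0, 0, 1]

/-- The inverse of the monodromy matrix `M₁∞`, with the period `2πi` replaced by a parameter `t`. -/
def monodromyInftyInv (t : R) : Matrix (Fin 4) (Fin 4) R :=
  !![1, 0, t, 0;
     0, -1, -2, 0;
     0, 0, 1, -t;
     0, 0, 0, -1]

/-- The block-diagonal part `J` of `M₁₀ M₁∞` (blocks of size two), which is an involution. -/
def monodromyInvolution (t : R) : Matrix (Fin 4) (Fin 4) R :=
  !![1, t, 0, 0;
     0, -1, 0, 0;
     0, 0, 1, 0;
     0, 0, 0, -1]

/-- The column `u` in the decomposition `M₁₀ M₁∞ = J + u vᵀ`. -/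
def monodromyColumn (t : R) : Fin 4 → R := ![t, -2, 0, 0]

/-- The row `v` in the decomposition `M₁₀ M₁∞ = J + u vᵀ`. -/
def monodromyRow (t : R) : Fin 4 → R := ![0, 0, 1, -t]

theorem monodromyInvolution_sq (t : R) : monodromyInvolution t ^ 2 = 1 := by
  rw [sq]
  ext i j
  fin_cases i <;> fin_cases j <;> simp [monodromyInvolution, Matrix.mul_apply, Fin.sum_univ_four]

theorem monodromyInvolution_mulVec_column (t : R) :
    monodromyInvolution t *ᵥ monodromyColumn t = (-1 : R) • monodromyColumn t := by
  ext i
  fin_cases i <;> simp [monodromyInvolution, monodromyColumn, mulVec, dotProduct,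
    Fin.sum_univ_four]
  ring

theorem monodromyRow_dotProduct_column (t : R) : monodromyRow t ⬝ᵥ monodromyColumn t = 0 := by
  simp [monodromyRow, monodromyColumn, dotProduct, Fin.sum_univ_four]

theorem monodromyRow_vecMul_involution_sub (t : R) :
    monodromyRow t ᵥ* monodromyInvolution t - monodromyRow t = ![0, 0, 0, 2 * t] := by
  ext i
  fin_cases i <;> simp [monodromyInvolution, monodromyRow]
  ring

theorem det_monodromyInftyInv (t : R) : (monodromyInftyInv t).det = 1 := by
  have upperTriangular : (monodromyInftyInv t).IsUpperTriangular := by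
    intro i j hij
    fin_cases i <;> fin_cases j <;> simp_all [monodromyInftyInv]
  rw [det_of_isUpperTriangular upperTriangular]
  simp [monodromyInftyInv, Fin.prod_univ_four]

theorem monodromyZero_eq_mul_monodromyInftyInv (t : R) :
    monodromyZero t = (monodromyInvolution t + vecMulVec (monodromyColumn t) (monodromyRow t)) *
      monodromyInftyInv t := by
  ext i j
  fin_cases i <;> fin_cases j <;>
    simp [monodromyZero, monodromyInvolution, monodromyColumn, monodromyRow, monodromyInftyInv,
      Matrix.mul_apply, Fin.sum_univ_four, vecMulVec_apply, -cons_vecMulVec, -vecMulVec_cons]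
  ring

theorem monodromyZero_mul_inv (t : R) :
    monodromyZero t * (monodromyInftyInv t)⁻¹ =
      monodromyInvolution t + vecMulVec (monodromyColumn t) (monodromyRow t) := by
  rw [monodromyZero_eq_mul_monodromyInftyInv, mul_nonsing_inv_cancel_right]
  simp only [det_monodromyInftyInv, isUnit_one]

theorem monodromyZero_mul_inv_sq_sub_one (t : R) :
    (monodromyZero t * (monodromyInftyInv t)⁻¹) ^ 2 - 1 =
      vecMulVec (monodromyColumn t) ![0, 0, 0, 2 * t] := by
  rw [monodromyZero_mul_inv,
    add_vecMulVec_sq_of_mulVec_eq_smul (monodromyInvolution_mulVec_column t),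
    monodromyInvolution_sq, add_sub_cancel_left, monodromyRow_dotProduct_column, add_zero,
    neg_one_smul, neg_add_eq_sub, monodromyRow_vecMul_involution_sub]

end Monodromy

theorem stmt7_general {R : Type*} [CommRing R] [IsDomain R] (h2 : (2 : R) ≠ 0) {t : R}
    (ht : t ≠ 0) : ((monodromyZero t * (monodromyInftyInv t)⁻¹) ^ 2 - 1).rank = 1 := by
  have column_ne_zero : monodromyColumn t ≠ 0 := fun h ↦ ht (congrFun h 0)
  have row_ne_zero : ![0, 0, 0, 2 * t] ≠ 0 := fun h ↦ mul_ne_zero h2 ht (congrFun h 3)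
  rw [monodromyZero_mul_inv_sq_sub_one]
  exact rank_vecMulVec_eq_one column_ne_zero row_ne_zero

theorem stmt7 : ((M10 * M1inf) ^ 2 - 1).rank = 1 := by
  simpa only [M10, M1inf, monodromyZero, monodromyInftyInv, neg_mul] using
    stmt7_general two_ne_zero two_pi_I_ne_zero
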